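/- arXiv:2210.09447 — 5 statements merged into one kernel-verified Lean document; each statement's English description precedes it below -/
import Mathlib

section
/- For any monomial a in r variables, the divisor-counting function h, defined by h(i) = the number of monomials of degree i dividing a, is log-concave: h(i-1)·h(i+1) ≤ h(i)^2 for all i ≥ 1. (In other words, all pure O-sequences of type 1 are log-concave, in any codimension.) -/
/-- `divCount a i` is the number of monomials of degree `i` dividing the
monomial (in `r` variables) with exponent vector `a`. -/
noncomputable def divCount {r : ℕ} (a : Fin r → ℕ) (i : ℕ) : ℕ :=
  {b : Fin r → ℕ | (∀ j, b j ≤ a j) ∧ ∑ j, b j = i}.ncard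

/-!
The divisors of a monomial with exponent vector `a` are counted by degree by the coefficients of
`∏ j, (1 + T + ⋯ + T ^ a j)`. A sequence `f` is strongly log-concave when all `2 × 2` minors of its
Toeplitz kernel `f (x - y)` are nonnegative. Multiplying generating functions multiplies Toeplitz
kernels, so by the Cauchy–Binet formula strong log-concavity passes to products, and it is obvious
for a factor `1 + T + ⋯ + T ^ n`, whose coefficients are the indicator function of an interval.
-/

open Finset
open scoped AddMonoidAlgebra LaurentPolynomial

section TotalPositivity

variable {α β γ R : Type*}

theorem sum_sum_minor_mul_minor [CommRing R] (s : Finset β) (u v p q : β → R) :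
    ∑ z ∈ s, ∑ w ∈ s, (u z * v w - u w * v z) * (p z * q w - p w * q z) =
      2 * ((∑ z ∈ s, u z * p z) * (∑ z ∈ s, v z * q z) -
        (∑ z ∈ s, u z * q z) * ∑ z ∈ s, v z * p z) := by
  rw [mul_sub, two_mul, two_mul]
  nth_rw 2 [mul_comm (∑ z ∈ s, u z * p z), mul_comm (∑ z ∈ s, u z * q z)]
  simp only [sum_mul_sum, ← sum_add_distrib, ← sum_sub_distrib]
  exact sum_congr rfl fun z _ ↦ sum_congr rfl fun w _ ↦ by ring

/-- A kernel is totally positive of order two when its `2 × 2` minors, with rows and columns taken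
in increasing order, are nonnegative. The entries themselves are allowed to be negative. -/
def IsTP2 [Preorder α] [Preorder β] [Mul R] [LE R] (K : α → β → R) : Prop :=
  ∀ ⦃x₁ x₂⦄, x₁ ≤ x₂ → ∀ ⦃y₁ y₂⦄, y₁ ≤ y₂ → K x₁ y₂ * K x₂ y₁ ≤ K x₁ y₁ * K x₂ y₂

theorem IsTP2.sum_mul [Preorder α] [LinearOrder β] [Preorder γ]
    [CommRing R] [LinearOrder R] [IsStrictOrderedRing R] {K : α → β → R} {L : β → γ → R}
    (hK : IsTP2 K) (hL : IsTP2 L) (s : Finset β) :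
    IsTP2 fun x y ↦ ∑ z ∈ s, K x z * L z y := by
  intro x₁ x₂ hx y₁ y₂ hy
  -- Exchanging `z` and `w` changes the sign of both minors, hence not the sign of their product.
  have minors_nonneg (z w : β) : 0 ≤ (K x₁ z * K x₂ w - K x₁ w * K x₂ z) *
      (L z y₁ * L w y₂ - L w y₁ * L z y₂) := by
    rcases le_total z w with hzw | hwz
    · refine mul_nonneg (sub_nonneg.2 (hK hx hzw)) (sub_nonneg.2 ?_)
      simpa only [mul_comm] using hL hzw hy
    · refine mul_nonneg_of_nonpos_of_nonpos (sub_nonpos.2 (hK hx hwz)) (sub_nonpos.2 ?_)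
      simpa only [mul_comm] using hL hwz hy
  have double_sum_nonneg := sum_nonneg fun z (_ : z ∈ s) ↦ sum_nonneg fun w (_ : w ∈ s) ↦
    minors_nonneg z w
  rw [sum_sum_minor_mul_minor s (K x₁) (K x₂) (L · y₁) (L · y₂)] at double_sum_nonneg
  exact sub_nonneg.1 (nonneg_of_mul_nonneg_right double_sum_nonneg two_pos)

end TotalPositivity

section StrongLogConcavity

variable {G R : Type*}

/-- A family indexed by an ordered group is strongly log-concave when its Toeplitz kernel is totally
positive of order two. The nonnegative such families are the Pólya frequency families of order two,
that is, for integer indices, the log-concave sequences without internal zeros. -/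
def StronglyLogConcave [Preorder G] [Sub G] [Mul R] [LE R] (f : G → R) : Prop :=
  IsTP2 fun x y ↦ f (x - y)

theorem StronglyLogConcave.mul_le_sq [AddCommGroup G] [Preorder G] [AddLeftMono G]
    [Monoid R] [LE R] {f : G → R} (hf : StronglyLogConcave f) (x : G) {d : G} (hd : 0 ≤ d) :
    f (x - d) * f (x + d) ≤ f x ^ 2 := by
  simpa only [sub_zero, add_sub_cancel_right, sq] using hf (le_add_of_nonneg_right hd) hd

theorem stronglyLogConcave_indicator [AddCommGroup G] [PartialOrder G] [IsOrderedAddMonoid G]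
    [Semiring R] [PartialOrder R] [IsOrderedRing R] (s : Set G) [s.OrdConnected] :
    StronglyLogConcave (s.indicator (1 : G → R)) := by
  intro x₁ x₂ hx y₁ y₂ hy
  have indicator_nonneg (z : G) : 0 ≤ s.indicator (1 : G → R) z :=
    Set.indicator_nonneg (fun _ _ ↦ zero_le_one) z
  by_cases hs : x₁ - y₂ ∈ s ∧ x₂ - y₁ ∈ s
  · obtain ⟨hlow, hhigh⟩ := hs
    have h₁ : x₁ - y₁ ∈ s := Set.OrdConnected.out' hlow hhigh
      ⟨sub_le_sub_left hy x₁, sub_le_sub_right hx y₁⟩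
    have h₂ : x₂ - y₂ ∈ s := Set.OrdConnected.out' hlow hhigh
      ⟨sub_le_sub_right hx y₂, sub_le_sub_left hy x₂⟩
    simp only [Set.indicator_of_mem, hlow, hhigh, h₁, h₂, Pi.one_apply, le_refl]
  · have vanish : s.indicator (1 : G → R) (x₁ - y₂) * s.indicator 1 (x₂ - y₁) = 0 := by
      rcases not_and_or.1 hs with h | h <;> simp [h]
    exact vanish.trans_le (mul_nonneg (indicator_nonneg _) (indicator_nonneg _))

theorem coeff_mul_sub_eq_sum [AddCommGroup G] [CommSemiring R] (f g : R[G]) (x y : G)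
    {s : Finset G} (hs : g.coeff.support.map (addRightEmbedding y) ⊆ s) :
    (f * g).coeff (x - y) = ∑ z ∈ s, f.coeff (x - z) * g.coeff (z - y) := by
  calc (f * g).coeff (x - y)
      = ∑ k ∈ g.coeff.support, g.coeff k * f.coeff (-k + (x - y)) := by
        rw [mul_comm, AddMonoidAlgebra.coeff_mul_apply_left, Finsupp.sum]
    _ = ∑ z ∈ g.coeff.support.map (addRightEmbedding y), f.coeff (x - z) * g.coeff (z - y) := by
        rw [sum_map]
        refine sum_congr rfl fun k _ ↦ ?_
        rw [addRightEmbedding_apply, add_sub_cancel_right, mul_comm]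
        congr 2
        abel
    _ = ∑ z ∈ s, f.coeff (x - z) * g.coeff (z - y) := by
        refine sum_subset hs fun z _ hz ↦ ?_
        have : g.coeff (z - y) = 0 := by
          by_contra h
          exact hz (mem_map.2 ⟨z - y, Finsupp.mem_support_iff.2 h, sub_add_cancel z y⟩)
        rw [this, mul_zero]

theorem StronglyLogConcave.coeff_mul [AddCommGroup G] [LinearOrder G]
    [CommRing R] [LinearOrder R] [IsStrictOrderedRing R] {f g : R[G]}
    (hf : StronglyLogConcave f.coeff) (hg : StronglyLogConcave g.coeff) :
    StronglyLogConcave (f * g).coeff := by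
  intro x₁ x₂ hx y₁ y₂ hy
  let s := g.coeff.support.map (addRightEmbedding y₁) ∪ g.coeff.support.map (addRightEmbedding y₂)
  have toeplitz₁ (x : G) := coeff_mul_sub_eq_sum f g x y₁ (s := s) subset_union_left
  have toeplitz₂ (x : G) := coeff_mul_sub_eq_sum f g x y₂ (s := s) subset_union_right
  simpa only [toeplitz₁, toeplitz₂] using IsTP2.sum_mul hf hg s hx hy

theorem stronglyLogConcave_coeff_one [AddCommGroup G] [PartialOrder G] [IsOrderedAddMonoid G]
    [Semiring R] [PartialOrder R] [IsOrderedRing R] :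
    StronglyLogConcave (1 : R[G]).coeff := by
  classical
  have coeff_eq : ⇑(1 : R[G]).coeff = ({0} : Set G).indicator 1 := by
    ext x
    simp [AddMonoidAlgebra.one_def, Finsupp.single_apply, Set.indicator_apply, eq_comm]
  exact coeff_eq ▸ stronglyLogConcave_indicator {0}

theorem StronglyLogConcave.coeff_prod {ι : Type*} [AddCommGroup G] [LinearOrder G]
    [IsOrderedAddMonoid G] [CommRing R] [LinearOrder R] [IsStrictOrderedRing R]
    {s : Finset ι} {f : ι → R[G]} (hf : ∀ j ∈ s, StronglyLogConcave (f j).coeff) :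
    StronglyLogConcave (∏ j ∈ s, f j).coeff :=
  prod_induction f (fun p ↦ StronglyLogConcave p.coeff) (fun _ _ ↦ StronglyLogConcave.coeff_mul)
    stronglyLogConcave_coeff_one hf

end StrongLogConcavity

section DivisorPolynomial

theorem stronglyLogConcave_coeff_sum_T {R : Type*} [Semiring R] [PartialOrder R] [IsOrderedRing R]
    (n : ℕ) : StronglyLogConcave (∑ t ∈ Iic n, LaurentPolynomial.T t : R[T;T⁻¹]).coeff := by
  have coeff_eq : ⇑(∑ t ∈ Iic n, LaurentPolynomial.T t : R[T;T⁻¹]).coeff =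
      (Set.Icc (0 : ℤ) n).indicator 1 := by
    ext k
    rw [AddMonoidAlgebra.coeff_sum, Finsupp.finsetSum_apply]
    simp only [LaurentPolynomial.T_apply, Set.indicator_apply, Set.mem_Icc, Pi.one_apply]
    by_cases hk : 0 ≤ k
    · lift k to ℕ using hk
      simp
    · rw [if_neg fun h ↦ hk h.1]
      exact sum_eq_zero fun t _ ↦ if_neg (by omega)
  exact coeff_eq ▸ stronglyLogConcave_indicator (Set.Icc (0 : ℤ) n)

variable {ι : Type*} [Fintype ι]

/-- The polynomial `∏ j, (1 + T + ⋯ + T ^ a j)`, which is the generating function by degree of the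
divisors of the monomial with exponent vector `a`. It is taken as a Laurent polynomial because
strong log-concavity involves coefficients at negative indices. -/
noncomputable def divisorPolynomial (a : ι → ℕ) : ℤ[T;T⁻¹] :=
  ∏ j, ∑ t ∈ Iic (a j), LaurentPolynomial.T t

theorem stronglyLogConcave_coeff_divisorPolynomial (a : ι → ℕ) :
    StronglyLogConcave (divisorPolynomial a).coeff :=
  StronglyLogConcave.coeff_prod fun j _ ↦ stronglyLogConcave_coeff_sum_T (a j)

theorem divisorPolynomial_eq_sum [DecidableEq ι] (a : ι → ℕ) :
    divisorPolynomial a =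
      ∑ b ∈ Fintype.piFinset fun j ↦ Iic (a j), LaurentPolynomial.T (∑ j, b j : ℕ) := by
  rw [divisorPolynomial, prod_univ_sum]
  refine sum_congr rfl fun b _ ↦ ?_
  simp [LaurentPolynomial.T, -LaurentPolynomial.single_eq_C_mul_T]

theorem coeff_divisorPolynomial {r : ℕ} (a : Fin r → ℕ) (i : ℕ) :
    (divisorPolynomial a).coeff i = divCount a i := by
  have divisors_eq : {b : Fin r → ℕ | (∀ j, b j ≤ a j) ∧ ∑ j, b j = i} =
      ↑{b ∈ Fintype.piFinset fun j ↦ Iic (a j) | ∑ j, b j = i} := by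
    ext b
    simp
  rw [divCount, divisors_eq, Set.ncard_coe_finset, divisorPolynomial_eq_sum,
    AddMonoidAlgebra.coeff_sum, Finsupp.finsetSum_apply]
  simp only [LaurentPolynomial.T_apply, Nat.cast_inj, sum_boole]

end DivisorPolynomial

/-- **All pure `O`-sequences of type 1 are log-concave, in any codimension.**
For any monomial in `r` variables, its divisor-counting function is log-concave. -/
theorem stmt_1 {r : ℕ} (a : Fin r → ℕ) (i : ℕ) (hi : 1 ≤ i) :
    divCount a (i - 1) * divCount a (i + 1) ≤ (divCount a i) ^ 2 := by
  have h := (stronglyLogConcave_coeff_divisorPolynomial a).mul_le_sq i zero_le_one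
  zify
  simpa only [← coeff_divisorPolynomial, Nat.cast_sub hi, Nat.cast_add, Nat.cast_one] using h
end

section
/- Let p and q be real polynomials such that every coefficient of p in degrees 0 through deg p is strictly positive, every coefficient of q in degrees 0 through deg q is strictly positive, and the coefficient sequences of p and q are both log-concave. Then every coefficient of p·q in degrees 0 through deg(p·q) is strictly positive and the coefficient sequence of p·q is log-concave. -/
/-!
Over a nonnegative sequence without internal zeros, log-concavity says that the Toeplitz kernel
`(r, s) ↦ p_{r - s}` has nonnegative `2 × 2` minors. The Toeplitz kernel of `p * q` is the product
of those of `p` and `q`, and by Cauchy–Binet nonnegativity of `2 × 2` minors passes to products;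
without subtraction, Cauchy–Binet becomes a rearrangement inequality for double sums. Conversely,
the `2 × 2` minors of the kernel of `p * q` give back log-concavity, and also positivity of every
coefficient lying between two positive ones.
-/

open Finset Polynomial

section TotalPositivity

theorem sum_sum_mul_swap_le {κ R : Type*} [Semiring R] [LinearOrder R] [IsStrictOrderedRing R]
    [ExistsAddOfLE R] [LinearOrder κ] (s : Finset κ) {F G : κ → κ → R}
    (hF : ∀ ⦃k l⦄, k ≤ l → F l k ≤ F k l) (hG : ∀ ⦃k l⦄, k ≤ l → G l k ≤ G k l) :
    ∑ k ∈ s, ∑ l ∈ s, F k l * G l k ≤ ∑ k ∈ s, ∑ l ∈ s, F k l * G k l := by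
  have rearrangement (k l : κ) :
      F k l * G l k + F l k * G k l ≤ F k l * G k l + F l k * G l k := by
    rcases le_total k l with h | h
    · exact mul_add_mul_le_mul_add_mul' (hF h) (hG h)
    · exact mul_add_mul_le_mul_add_mul (hF h) (hG h)
  have add_swap (H : κ → κ → R) :
      ∑ k ∈ s, ∑ l ∈ s, (H k l + H l k) = 2 * ∑ k ∈ s, ∑ l ∈ s, H k l := by
    simp only [sum_add_distrib]
    rw [sum_comm (f := fun k l => H l k), two_mul]
  refine le_of_mul_le_mul_left ?_ (zero_lt_two (α := R))
  rw [← add_swap fun k l => F k l * G l k, ← add_swap fun k l => F k l * G k l]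
  exact sum_le_sum fun k _ => sum_le_sum fun l _ => rearrangement k l

variable {ι κ μ R : Type*} [CommSemiring R] [LinearOrder R] [IsStrictOrderedRing R]

/-- A kernel is totally positive of order two if its entries and its `2 × 2` minors are nonnegative.
This is the property of Toeplitz kernels that is stable under multiplication. The two terms of a
minor are compared without subtraction, so that `R` may be a semiring. -/
structure IsTP2_s3 [Preorder ι] [Preorder κ] (K : ι → κ → R) : Prop where
  nonneg : ∀ i j, 0 ≤ K i j
  mul_le_mul : ∀ ⦃i i'⦄, i ≤ i' → ∀ ⦃j j'⦄, j ≤ j' → K i j' * K i' j ≤ K i j * K i' j'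

theorem IsTP2_s3.sum_mul [ExistsAddOfLE R] [Preorder ι] [LinearOrder κ] [Preorder μ]
    {K : ι → κ → R} {L : κ → μ → R} (hK : IsTP2_s3 K) (hL : IsTP2_s3 L) (s : Finset κ) :
    IsTP2_s3 fun i j => ∑ k ∈ s, K i k * L k j where
  nonneg i j := sum_nonneg fun k _ => mul_nonneg (hK.nonneg i k) (hL.nonneg k j)
  mul_le_mul i i' hi j j' hj := by
    calc (∑ k ∈ s, K i k * L k j') * ∑ l ∈ s, K i' l * L l j
        = ∑ k ∈ s, ∑ l ∈ s, (K i k * K i' l) * (L l j * L k j') := by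
          rw [sum_mul_sum]
          exact sum_congr rfl fun k _ => sum_congr rfl fun l _ => by ring
      _ ≤ ∑ k ∈ s, ∑ l ∈ s, (K i k * K i' l) * (L k j * L l j') :=
          sum_sum_mul_swap_le s (fun _ _ h => hK.mul_le_mul hi h)
            fun k l h => by simpa only [mul_comm] using hL.mul_le_mul h hj
      _ = (∑ k ∈ s, K i k * L k j) * ∑ l ∈ s, K i' l * L l j' := by
          rw [sum_mul_sum]
          exact sum_congr rfl fun k _ => sum_congr rfl fun l _ => by ring

end TotalPositivity

section LogConcave

variable {R : Type*} [CommSemiring R] [LinearOrder R] {a : ℕ → R}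

/-- Log-concavity of a sequence, in terms of consecutive entries; positivity and the absence of
internal zeros are not part of it. -/
def IsLogConcave (a : ℕ → R) : Prop :=
  ∀ i, 1 ≤ i → a (i - 1) * a (i + 1) ≤ a i ^ 2

theorem mul_le_of_ordConnected_support (ha₀ : ∀ i, 0 ≤ a i)
    (hs : (Function.support a).OrdConnected) {i j k : ℕ} (hij : i ≤ j) (hjk : j ≤ k) {x : R}
    (hx : 0 ≤ x) (h : 0 < a j → a i * a k ≤ x) : a i * a k ≤ x := by
  by_cases hi : a i = 0
  · rwa [hi, zero_mul]
  by_cases hk : a k = 0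
  · rwa [hk, mul_zero]
  exact h ((ha₀ j).lt_of_ne' (hs.out hi hk ⟨hij, hjk⟩))

variable [IsStrictOrderedRing R]

-- Transitivity `x₁ / y₁ ≤ x₂ / y₂ ≤ x₃ / y₃`, with denominators cleared.
theorem mul_le_mul_cross_trans {x₁ y₁ x₂ y₂ x₃ y₃ : R} (hy₁ : 0 ≤ y₁) (hy₂ : 0 < y₂) (hy₃ : 0 ≤ y₃)
    (h₁₂ : x₁ * y₂ ≤ x₂ * y₁) (h₂₃ : x₂ * y₃ ≤ x₃ * y₂) : x₁ * y₃ ≤ x₃ * y₁ := by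
  refine le_of_mul_le_mul_right ?_ hy₂
  calc x₁ * y₃ * y₂ = x₁ * y₂ * y₃ := by ring
    _ ≤ x₂ * y₁ * y₃ := mul_le_mul_of_nonneg_right h₁₂ hy₃
    _ = x₂ * y₃ * y₁ := by ring
    _ ≤ x₃ * y₂ * y₁ := mul_le_mul_of_nonneg_right h₂₃ hy₁
    _ = x₃ * y₁ * y₂ := by ring

namespace IsLogConcave

theorem mul_succ_le (ha : IsLogConcave a) (ha₀ : ∀ i, 0 ≤ a i)
    (hs : (Function.support a).OrdConnected) {i j : ℕ} (hij : i ≤ j) :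
    a i * a (j + 1) ≤ a j * a (i + 1) := by
  induction j, hij using Nat.le_induction with
  | base => rfl
  | succ j hij ih =>
    refine mul_le_of_ordConnected_support ha₀ hs (j := j + 1) (by omega) (by omega)
      (mul_nonneg (ha₀ _) (ha₀ _)) fun hpos => ?_
    have hstep : a j * a (j + 1 + 1) ≤ a (j + 1) * a (j + 1) := by
      simpa only [Nat.add_sub_cancel, sq] using ha (j + 1) (by omega)
    exact mul_le_mul_cross_trans (ha₀ _) hpos (ha₀ _) ih hstep

theorem mul_add_le (ha : IsLogConcave a) (ha₀ : ∀ i, 0 ≤ a i)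
    (hs : (Function.support a).OrdConnected) {i j : ℕ} (hij : i ≤ j) (d : ℕ) :
    a i * a (j + d) ≤ a (i + d) * a j := by
  induction d with
  | zero => rfl
  | succ d ih =>
    refine mul_le_of_ordConnected_support ha₀ hs (j := j + d) (by omega)
      (Nat.le_succ _) (mul_nonneg (ha₀ _) (ha₀ _)) fun hpos => ?_
    have hstep : a (i + d) * a (j + (d + 1)) ≤ a (i + (d + 1)) * a (j + d) :=
      (ha.mul_succ_le ha₀ hs (Nat.add_le_add_right hij d)).trans_eq (mul_comm _ _)
    exact mul_le_mul_cross_trans (ha₀ _) hpos (ha₀ _) ih hstep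

end IsLogConcave

end LogConcave

section PolyaFrequency

theorem coeff_mul_eq_sum_range_coeff_X_pow_mul {R : Type*} [Semiring R] (p q : R[X])
    {n N : ℕ} (hn : n < N) :
    (p * q).coeff n = ∑ k ∈ range N, (X ^ k * p).coeff n * q.coeff k := by
  have hsub : range (n + 1) ⊆ range N := range_mono hn
  rw [coeff_mul, ← Nat.sum_antidiagonal_swap, Nat.sum_antidiagonal_eq_sum_range_succ_mk,
    ← sum_subset hsub]
  · refine sum_congr rfl fun k hk => ?_
    rw [coeff_X_pow_mul', if_pos (mem_range_succ_iff.mp hk), Prod.swap_prod_mk]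
  · intro k _ hk
    rw [coeff_X_pow_mul', if_neg (mt mem_range_succ_iff.mpr hk), zero_mul]

variable {R : Type*} [CommSemiring R] [LinearOrder R] {p q : R[X]}

/-- A polynomial is PF₂ if its coefficients form a Pólya frequency sequence of order two, that is,
if the Toeplitz kernel `(r, s) ↦ p_{r - s}` is totally positive of order two. Multiplication by
`X ^ s` encodes the convention `p_i = 0` for `i < 0`. -/
def IsPF2 (p : R[X]) : Prop :=
  IsTP2_s3 fun r s : ℕ => (X ^ s * p).coeff r

namespace IsPF2

theorem coeff_nonneg (hp : IsPF2 p) (i : ℕ) : 0 ≤ p.coeff i := by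
  simpa only [pow_zero, one_mul] using hp.nonneg i 0

theorem isLogConcave (hp : IsPF2 p) : IsLogConcave p.coeff := by
  intro i hi
  obtain ⟨n, rfl⟩ := Nat.exists_eq_add_of_le' hi
  have hminor := hp.mul_le_mul (Nat.le_succ (n + 1)) zero_le_one
  simpa only [pow_zero, one_mul, pow_one, coeff_X_mul, Nat.succ_eq_add_one, Nat.add_sub_cancel,
    sq] using hminor

end IsPF2

variable [IsStrictOrderedRing R]

theorem IsLogConcave.isPF2 (hp : IsLogConcave p.coeff) (hp₀ : ∀ i, 0 ≤ p.coeff i)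
    (hs : (Function.support p.coeff).OrdConnected) : IsPF2 p := by
  have hnonneg (r s : ℕ) : 0 ≤ (X ^ s * p).coeff r := by
    rw [coeff_X_pow_mul']
    split_ifs
    exacts [hp₀ _, le_rfl]
  refine ⟨hnonneg, fun r r' hr s s' hs' => ?_⟩
  rcases le_or_gt s' r with hsr | hrs
  · obtain ⟨d, rfl⟩ := Nat.exists_eq_add_of_le' hs'
    obtain ⟨i, rfl⟩ := Nat.exists_eq_add_of_le' hsr
    obtain ⟨j, rfl⟩ := Nat.exists_eq_add_of_le' (hsr.trans hr)
    have hshift (n : ℕ) : (X ^ s * p).coeff (n + (d + s)) = p.coeff (n + d) := by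
      rw [← add_assoc, coeff_X_pow_mul]
    rw [coeff_X_pow_mul, coeff_X_pow_mul, hshift, hshift]
    exact hp.mul_add_le hp₀ hs (Nat.le_of_add_le_add_right hr) d
  · rw [coeff_X_pow_mul' p s' r, if_neg hrs.not_ge, zero_mul]
    exact mul_nonneg (hnonneg _ _) (hnonneg _ _)

theorem isPF2_of_coeff_pos (hpos : ∀ i ≤ p.natDegree, 0 < p.coeff i)
    (hp : IsLogConcave p.coeff) : IsPF2 p := by
  have hnonneg (i : ℕ) : 0 ≤ p.coeff i := by
    rcases le_or_gt i p.natDegree with h | h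
    exacts [(hpos i h).le, (coeff_eq_zero_of_natDegree_lt h).ge]
  have hsupport : Function.support p.coeff = Set.Iic p.natDegree :=
    Set.Subset.antisymm (fun _ => le_natDegree_of_ne_zero) fun i hi => (hpos i hi).ne'
  exact hp.isPF2 hnonneg (hsupport ▸ Set.ordConnected_Iic)

namespace IsPF2

theorem mul [ExistsAddOfLE R] (hp : IsPF2 p) (hq : IsPF2 q) : IsPF2 (p * q) := by
  have hcomp {r N : ℕ} (hr : r < N) (s : ℕ) : (X ^ s * (p * q)).coeff r =
      ∑ k ∈ range N, (X ^ k * p).coeff r * (X ^ s * q).coeff k := by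
    rw [mul_left_comm, coeff_mul_eq_sum_range_coeff_X_pow_mul _ _ hr]
  refine ⟨fun r s => ?_, fun r r' hr s s' hs => ?_⟩
  · rw [hcomp r.lt_succ_self]
    exact (IsTP2_s3.sum_mul hp hq _).nonneg r s
  · have hr' : r < r' + 1 := Nat.lt_succ_of_le hr
    simp only [hcomp hr', hcomp r'.lt_succ_self]
    exact (IsTP2_s3.sum_mul hp hq _).mul_le_mul hr hs

theorem ordConnected_support (hp : IsPF2 p) : (Function.support p.coeff).OrdConnected := by
  refine ⟨fun i hi k hk j ⟨hij, hjk⟩ hj => ?_⟩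
  obtain ⟨d, rfl⟩ := Nat.exists_eq_add_of_le hij
  have hminor : p.coeff i * p.coeff k ≤ p.coeff (i + d) * (X ^ d * p).coeff k := by
    simpa only [pow_zero, one_mul, coeff_X_pow_mul] using hp.mul_le_mul hjk d.zero_le
  have hik : 0 < p.coeff i * p.coeff k :=
    mul_pos ((hp.coeff_nonneg i).lt_of_ne' hi) ((hp.coeff_nonneg k).lt_of_ne' hk)
  rw [hj, zero_mul] at hminor
  exact hik.not_ge hminor

theorem coeff_pos_of_le_natDegree (hp : IsPF2 p) (h₀ : p.coeff 0 ≠ 0) {i : ℕ}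
    (hi : i ≤ p.natDegree) : 0 < p.coeff i := by
  have hp_ne : p ≠ 0 := fun h => h₀ (by rw [h, coeff_zero])
  have hlead : p.coeff p.natDegree ≠ 0 := leadingCoeff_ne_zero.mpr hp_ne
  exact (hp.coeff_nonneg i).lt_of_ne' (hp.ordConnected_support.out h₀ hlead ⟨i.zero_le, hi⟩)

end IsPF2

end PolyaFrequency

theorem stmt_3_general {R : Type*} [CommSemiring R] [LinearOrder R] [IsStrictOrderedRing R]
    [ExistsAddOfLE R] (p q : R[X])
    (hp_pos : ∀ i ≤ p.natDegree, 0 < p.coeff i)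
    (hq_pos : ∀ i ≤ q.natDegree, 0 < q.coeff i)
    (hp_lc : IsLogConcave p.coeff) (hq_lc : IsLogConcave q.coeff) :
    (∀ i ≤ (p * q).natDegree, 0 < (p * q).coeff i) ∧ IsLogConcave (p * q).coeff := by
  have hpq : IsPF2 (p * q) :=
    (isPF2_of_coeff_pos hp_pos hp_lc).mul (isPF2_of_coeff_pos hq_pos hq_lc)
  have hpq₀ : 0 < (p * q).coeff 0 := by
    rw [mul_coeff_zero]
    exact mul_pos (hp_pos 0 (Nat.zero_le _)) (hq_pos 0 (Nat.zero_le _))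
  exact ⟨fun _ => hpq.coeff_pos_of_le_natDegree hpq₀.ne', hpq.isLogConcave⟩

/-- **Products of positive log-concave polynomials are positive and log-concave.**
If `p` and `q` are real polynomials whose coefficients in degrees `0,…,deg`
are strictly positive and whose coefficient sequences are log-concave, then
the same holds for `p * q`. -/
theorem stmt_3 (p q : Polynomial ℝ)
    (hp_pos : ∀ i ≤ p.natDegree, 0 < p.coeff i)
    (hq_pos : ∀ i ≤ q.natDegree, 0 < q.coeff i)
    (hp_lc : ∀ i, 1 ≤ i → p.coeff (i - 1) * p.coeff (i + 1) ≤ (p.coeff i) ^ 2)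
    (hq_lc : ∀ i, 1 ≤ i → q.coeff (i - 1) * q.coeff (i + 1) ≤ (q.coeff i) ^ 2) :
    (∀ i ≤ (p * q).natDegree, 0 < (p * q).coeff i) ∧
      (∀ i, 1 ≤ i →
        (p * q).coeff (i - 1) * (p * q).coeff (i + 1) ≤ ((p * q).coeff i) ^ 2) :=
  stmt_3_general p q hp_pos hq_pos hp_lc hq_lc
end

section
/- Let a : Fin r → ℕ be the exponent vector of a monomial of degree e, and let h(i) be the number of monomials of degree i dividing a. Then h is unimodal: there exists an index m with 0 ≤ m ≤ e such that h(i) ≤ h(i+1) for all i < m and h(i) ≥ h(i+1) for all m ≤ i < e. (Pure O-sequences of type 1 are unimodal.) -/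
/-!
The generating function of the divisors of a monomial by degree is the product over the variables
of the polynomials `1 + T + ⋯ + T ^ a j`. A sequence indexed by `ℤ` that is symmetric about `e / 2`
and increasing up to there compares two values by their distances to the centre. Multiplication by
`1 + T + ⋯ + T ^ c` preserves this shape, with centre `(e + c) / 2`: the difference of two
consecutive new coefficients telescopes to `f (i + 1) - f (i - c)`, and left of the new centre
`i + 1` is at least as close to `e / 2` as `i - c` is.
-/

open Finset LaurentPolynomial

/-- A symmetric unimodal sequence: symmetric about `e / 2` and weakly increasing up to there.
Indexing by `ℤ` avoids boundary cases for finite sequences, which are extended by zero. -/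
structure IsSymmUnimodal {α : Type*} [Preorder α] (f : ℤ → α) (e : ℤ) : Prop where
  symm : ∀ i, f (e - i) = f i
  monotoneOn : MonotoneOn f {i | 2 * i ≤ e}

namespace IsSymmUnimodal

section Preorder

variable {α : Type*} [Preorder α] {f : ℤ → α} {e : ℤ}

theorem le_of_le_of_add_le (hf : IsSymmUnimodal f e) {x y : ℤ} (hxy : x ≤ y) (hadd : x + y ≤ e) :
    f x ≤ f y := by
  rcases le_total (2 * y) e with hy | hy
  · exact hf.monotoneOn (by grind) hy hxy
  · rw [← hf.symm y]
    exact hf.monotoneOn (by grind) (by grind) (by lia)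

-- The bound is `2 * i + 1` because for odd `e` the two central values agree.
theorem antitoneOn (hf : IsSymmUnimodal f e) : AntitoneOn f {i | e ≤ 2 * i + 1} := by
  intro x hx y _ hxy
  rcases hxy.eq_or_lt with rfl | hlt
  · rfl
  · rw [← hf.symm y]
    exact hf.le_of_le_of_add_le (by grind) (by lia)

end Preorder

theorem sum_range_comp_sub {M : Type*} [AddCommMonoid M] [Preorder M] [AddLeftMono M] {f : ℤ → M}
    {e : ℤ} (hf : IsSymmUnimodal f e) (c : ℕ) :
    IsSymmUnimodal (fun i ↦ ∑ k ∈ range (c + 1), f (i - k)) (e + c) where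
  symm i := by
    rw [← sum_flip]
    refine sum_congr rfl fun k hk ↦ ?_
    have hkc : k ≤ c := Nat.lt_succ_iff.mp (mem_range.mp hk)
    rw [← hf.symm, Nat.cast_sub hkc]
    congr 1
    ring
  monotoneOn := by
    refine monotoneOn_of_le_add_one ⟨fun x _ y hy z hz ↦ ?_⟩ fun i _ _ hi ↦ ?_
    · grind
    have shift (k : ℕ) : i + 1 - ((k + 1 : ℕ) : ℤ) = i - k := by push_cast; ring
    have hclose : f (i - c) ≤ f (i + 1) := hf.le_of_le_of_add_le (by lia) (by grind)
    rw [sum_range_succ, sum_range_succ']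
    simp only [shift, Nat.cast_zero, sub_zero]
    exact add_le_add_right hclose _

end IsSymmUnimodal

section LaurentPolynomial

variable {R : Type*} [Semiring R]

theorem isSymmUnimodal_coeff_one [Preorder R] [ZeroLEOneClass R] :
    IsSymmUnimodal (1 : R[T;T⁻¹]).coeff 0 where
  symm i := by simp [← T_zero, eq_comm]
  monotoneOn := by
    intro x _ y hy hxy
    rw [← T_zero, T_apply, T_apply]
    split_ifs
    · rfl
    · grind
    · exact zero_le_one
    · rfl

theorem coeff_mul_sum_T (p : R[T;T⁻¹]) (s : Finset ℕ) (i : ℤ) :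
    (p * ∑ k ∈ s, T k).coeff i = ∑ k ∈ s, p.coeff (i - k) := by
  simp only [mul_sum, T, AddMonoidAlgebra.coeff_sum, Finsupp.finsetSum_apply,
    AddMonoidAlgebra.coeff_mul_single_apply, mul_one, sub_eq_add_neg]

theorem prod_T {S ι : Type*} [CommSemiring S] (s : Finset ι) (n : ι → ℤ) :
    ∏ j ∈ s, (T (n j) : S[T;T⁻¹]) = T (∑ j ∈ s, n j) := by
  simp only [T, AddMonoidAlgebra.prod_single, prod_const_one]

end LaurentPolynomial

section Divisors

variable {ι : Type*}

/-- The generating function, by degree, of the divisors of the monomial with exponents `a j` in the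
variables `j ∈ s`. It is a Laurent polynomial so that its coefficients are indexed by `ℤ`. -/
noncomputable def divisorPoly (s : Finset ι) (a : ι → ℕ) : ℕ[T;T⁻¹] :=
  ∏ j ∈ s, ∑ k ∈ range (a j + 1), T k

theorem isSymmUnimodal_coeff_divisorPoly (s : Finset ι) (a : ι → ℕ) :
    IsSymmUnimodal (divisorPoly s a).coeff (∑ j ∈ s, a j : ℕ) := by
  classical
  induction s using Finset.induction with
  | empty => exact isSymmUnimodal_coeff_one
  | insert j s hj ih =>
    have hcoeff : ⇑(divisorPoly (insert j s) a).coeff =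
        fun i ↦ ∑ k ∈ range (a j + 1), (divisorPoly s a).coeff (i - k) := by
      ext i
      rw [divisorPoly, prod_insert hj, mul_comm, coeff_mul_sum_T, divisorPoly]
    rw [hcoeff, sum_insert hj, add_comm (a j) (∑ j ∈ s, a j), Nat.cast_add]
    exact ih.sum_range_comp_sub (a j)

variable [Fintype ι]

/-- The number of divisors of degree `i` of the monomial with exponent vector `a`, for an arbitrary
finite set `ι` of variables. -/
noncomputable def divisorCount (a : ι → ℕ) (i : ℕ) : ℕ :=
  {b : ι → ℕ | (∀ j, b j ≤ a j) ∧ ∑ j, b j = i}.ncard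

theorem coeff_divisorPoly_univ (a : ι → ℕ) (i : ℕ) :
    (divisorPoly univ a).coeff i = divisorCount a i := by
  classical
  have hset : {b : ι → ℕ | (∀ j, b j ≤ a j) ∧ ∑ j, b j = i} =
      ({b ∈ Fintype.piFinset fun j ↦ range (a j + 1) | ∑ j, b j = i} : Finset (ι → ℕ)) := by
    ext b
    simp
  rw [divisorCount, hset, Set.ncard_coe_finset, card_filter, divisorPoly, prod_univ_sum]
  simp only [prod_T, ← Nat.cast_sum, AddMonoidAlgebra.coeff_sum, Finsupp.finsetSum_apply, T_apply,
    Nat.cast_inj]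

theorem stmt_5_general (a : ι → ℕ) :
    MonotoneOn (divisorCount a) (Set.Iic ((∑ j, a j) / 2)) ∧
      AntitoneOn (divisorCount a) (Set.Ici ((∑ j, a j) / 2)) := by
  have h := isSymmUnimodal_coeff_divisorPoly univ a
  have hcount : divisorCount a = fun i : ℕ ↦ (divisorPoly univ a).coeff i :=
    funext fun i ↦ (coeff_divisorPoly_univ a i).symm
  rw [hcount]
  constructor <;> intro x hx y hy hxy
  · exact h.monotoneOn (by grind) (by grind) (by lia)
  · exact h.antitoneOn (by grind) (by grind) (by lia)

end Divisors

/-- **Type 1 pure `O`-sequences are unimodal.**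
If `a` is the exponent vector of a monomial of degree `e`, then its
divisor-counting function is unimodal: it is weakly increasing up to some
index `m ≤ e` and weakly decreasing from `m` up to `e`. -/
theorem stmt_5 {r : ℕ} (a : Fin r → ℕ) (e : ℕ) (he : e = ∑ j, a j) :
    ∃ m, m ≤ e ∧ (∀ i, i < m → divCount a i ≤ divCount a (i + 1)) ∧
      (∀ i, m ≤ i → i < e → divCount a (i + 1) ≤ divCount a i) := by
  obtain ⟨hmono, hanti⟩ := he ▸ stmt_5_general a
  exact ⟨e / 2, Nat.div_le_self e 2, fun i hi ↦ hmono hi.le hi i.le_succ,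
    fun i hi _ ↦ hanti hi (hi.trans i.le_succ) i.le_succ⟩
end

section
/- Let e ≥ 12 and let M ⊂ ℕ^3 consist of the four degree-e monomials x^4y^4z^{e-8}, x^{e-2}yz, xy^{e-2}z, xyz^{e-2}, i.e., the exponent vectors (4,4,e-8), (e-2,1,1), (1,e-2,1), (1,1,e-2). Let h(i) be the number of monomials of degree i dividing at least one element of M. Then h(e-4) = 27, h(e-3) = 22, h(e-2) = 18, h(e-1) = 12, h(e) = 4, and h(e-3)^2 < h(e-4)·h(e-2); in particular h is not log-concave. (This gives an infinite family of non-log-concave pure O-sequences of codimension 3 and type 4.) -/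
/-- `divCountSet M i` is the number of monomials of degree `i` (in `r`
variables) dividing at least one monomial whose exponent vector lies in `M`:
the `i`-th entry of the pure `O`-sequence generated by `M`. -/
noncomputable def divCountSet {r : ℕ} (M : Set (Fin r → ℕ)) (i : ℕ) : ℕ :=
  {b : Fin r → ℕ | (∑ j, b j = i) ∧ ∃ a ∈ M, ∀ j, b j ≤ a j}.ncard

/-!
Divisors of degree `e - k` of a monomial of degree `e` are complementary to its divisors of degree
`k`. For `k ≤ 4` no monomial of degree `e - k` divides two of the four generators, so `h (e - k)` is
the sum of the numbers of divisors of degree `k` of the generators. Each generator has an exponent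
which is at least `4`, so such a divisor is determined by its other two exponents, which are bounded
by `(4, 4)` for the first generator and by `(1, 1)` for the others and have sum at most `k`.
For `k = 0, …, 4` this gives `1, 3, 6, 10, 15` plus three times `1, 3, 4, 4, 4`.
-/

open Finset

section Divisors

variable {ι : Type*} [Fintype ι] [DecidableEq ι]

/-- The monomials of degree `i` dividing the monomial with exponent vector `a`, as exponent
vectors. -/
def divisorsOfDegree (a : ι → ℕ) (i : ℕ) : Finset (ι → ℕ) :=
  {b ∈ Iic a | ∑ j, b j = i}

theorem mem_divisorsOfDegree {a b : ι → ℕ} {i : ℕ} :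
    b ∈ divisorsOfDegree a i ↔ b ≤ a ∧ ∑ j, b j = i := by
  simp [divisorsOfDegree]

theorem disjoint_divisorsOfDegree {a b : ι → ℕ} {i : ℕ} (h : ∑ j, (a ⊓ b) j < i) :
    Disjoint (divisorsOfDegree a i) (divisorsOfDegree b i) := by
  refine disjoint_left.2 fun c hca hcb => h.not_ge ?_
  rw [mem_divisorsOfDegree] at hca hcb
  calc i = ∑ j, c j := hca.2.symm
    _ ≤ ∑ j, (a ⊓ b) j := sum_le_sum fun j _ => le_inf hca.1 hcb.1 j

theorem sub_mem_divisorsOfDegree {a b : ι → ℕ} {i j : ℕ} (hij : i + j = ∑ l, a l)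
    (hb : b ∈ divisorsOfDegree a i) : a - b ∈ divisorsOfDegree a j := by
  rw [mem_divisorsOfDegree] at hb ⊢
  have degree_sub : ∑ l, (a - b) l = ∑ l, a l - ∑ l, b l :=
    sum_tsub_distrib _ fun l _ => hb.1 l
  exact ⟨tsub_le_self, by omega⟩

theorem card_divisorsOfDegree_symm {a : ι → ℕ} {i j : ℕ} (hij : i + j = ∑ l, a l) :
    #(divisorsOfDegree a i) = #(divisorsOfDegree a j) :=
  card_nbij' (a - ·) (a - ·)
    (fun _ => sub_mem_divisorsOfDegree hij)
    (fun _ => sub_mem_divisorsOfDegree (by omega))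
    (fun _ hb => tsub_tsub_cancel_of_le (mem_divisorsOfDegree.1 hb).1)
    (fun _ hb => tsub_tsub_cancel_of_le (mem_divisorsOfDegree.1 hb).1)

end Divisors

theorem card_divisorsOfDegree_insertNth {n k m : ℕ} (p : Fin (n + 1)) (a : Fin n → ℕ)
    (hk : k ≤ m) :
    #(divisorsOfDegree (p.insertNth m a) k) = #{c ∈ Iic a | ∑ j, c j ≤ k} := by
  refine card_nbij' p.removeNth (fun c => p.insertNth (k - ∑ j, c j) c) ?_ ?_ ?_ ?_
  · intro b hb
    obtain ⟨hba, rfl⟩ := mem_divisorsOfDegree.1 hb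
    have sum_removeNth_le : ∑ j, p.removeNth b j ≤ ∑ j, b j := by
      rw [Fin.sum_univ_succAbove b p]
      exact Nat.le_add_left _ _
    simpa using ⟨(Fin.le_insertNth_iff.1 hba).2, sum_removeNth_le⟩
  · intro c hc
    obtain ⟨hca, hck⟩ : c ≤ a ∧ ∑ j, c j ≤ k := by simpa using hc
    refine mem_divisorsOfDegree.2 ⟨?_, by simp [Fin.sum_univ_succAbove _ p, hck]⟩
    simpa [Fin.insertNth_le_iff] using ⟨(by omega : k ≤ m + ∑ j, c j), hca⟩
  · intro b hb
    obtain ⟨-, rfl⟩ := mem_divisorsOfDegree.1 hb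
    simp [Fin.sum_univ_succAbove b p, Fin.removeNth_apply]
  · intro c _
    simp

theorem divCountSet_range_eq_sum {ι : Type*} [Fintype ι] {r i : ℕ} {g : ι → Fin r → ℕ}
    (hg : Pairwise fun s t => ∑ j, (g s ⊓ g t) j < i) :
    divCountSet (Set.range g) i = ∑ s, #(divisorsOfDegree (g s) i) := by
  classical
  have divisors_eq : {b : Fin r → ℕ | (∑ j, b j = i) ∧ ∃ a ∈ Set.range g, ∀ j, b j ≤ a j} =
      (univ.biUnion fun s => divisorsOfDegree (g s) i : Finset (Fin r → ℕ)) := by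
    ext b
    simp [mem_divisorsOfDegree, Pi.le_def, and_comm]
  rw [divCountSet, divisors_eq, Set.ncard_coe_finset,
    card_biUnion fun s _ t _ hst => disjoint_divisorsOfDegree (hg hst)]

theorem divCountSet_range_sub_eq_sum {ι : Type*} [Fintype ι] {r e k : ℕ} {g : ι → Fin r → ℕ}
    (hdeg : ∀ s, ∑ j, g s j = e) (hk : k ≤ e)
    (hg : Pairwise fun s t => ∑ j, (g s ⊓ g t) j < e - k) :
    divCountSet (Set.range g) (e - k) = ∑ s, #(divisorsOfDegree (g s) k) := by
  rw [divCountSet_range_eq_sum hg]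
  exact sum_congr rfl fun s _ => card_divisorsOfDegree_symm (by rw [hdeg, Nat.sub_add_cancel hk])

/-- The exponent vectors of `x^4 y^4 z^(e-8)`, `x^(e-2) y z`, `x y^(e-2) z`, `x y z^(e-2)`. The
subtractions are truncated, so these have degree `e` only for `e ≥ 8`. -/
def pureOGenerators (e : ℕ) : Fin 4 → Fin 3 → ℕ :=
  ![![4, 4, e - 8], ![e - 2, 1, 1], ![1, e - 2, 1], ![1, 1, e - 2]]

theorem range_pureOGenerators (e : ℕ) :
    Set.range (pureOGenerators e) =
      {![4, 4, e - 8], ![e - 2, 1, 1], ![1, e - 2, 1], ![1, 1, e - 2]} := by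
  simp only [pureOGenerators, Matrix.range_cons, Matrix.range_empty, Set.union_empty,
    Set.singleton_union]

theorem sum_pureOGenerators {e : ℕ} (he : 8 ≤ e) (s : Fin 4) :
    ∑ j, pureOGenerators e s j = e := by
  fin_cases s <;>
    simp only [pureOGenerators, Fin.sum_univ_three, Fin.mk_one, Fin.zero_eta, Fin.reduceFinMk,
      Matrix.cons_val] <;>
    omega

theorem sum_pureOGenerators_inf_lt {e : ℕ} (he : 11 ≤ e) :
    Pairwise fun s t => ∑ j, (pureOGenerators e s ⊓ pureOGenerators e t) j < e - 4 := by
  intro s t hst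
  simp only [Fin.sum_univ_three, Pi.inf_apply]
  fin_cases s <;> fin_cases t <;>
    first
    | exact absurd rfl hst
    | simp only [pureOGenerators, Fin.mk_one, Fin.zero_eta, Fin.reduceFinMk, Matrix.cons_val]
      omega

theorem pureOGenerators_zero (e : ℕ) :
    pureOGenerators e 0 = (2 : Fin 3).insertNth (e - 8) ![4, 4] := by
  ext j
  fin_cases j <;> rfl

theorem pureOGenerators_succ (e : ℕ) (s : Fin 3) :
    pureOGenerators e s.succ = s.insertNth (e - 2) ![1, 1] := by
  ext j
  fin_cases s <;> fin_cases j <;> rfl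

theorem divCountSet_range_pureOGenerators_sub {e k : ℕ} (he : 12 ≤ e) (hk : k ≤ 4) :
    divCountSet (Set.range (pureOGenerators e)) (e - k) =
      #{c ∈ Iic ![4, 4] | ∑ j, c j ≤ k} + 3 * #{c ∈ Iic ![1, 1] | ∑ j, c j ≤ k} := by
  have sum_inf_lt : Pairwise fun s t =>
      ∑ j, (pureOGenerators e s ⊓ pureOGenerators e t) j < e - k :=
    (sum_pureOGenerators_inf_lt (by omega)).mono fun _ _ h => h.trans_le (by omega)
  have card_succ (s : Fin 3) : #(divisorsOfDegree (pureOGenerators e s.succ) k) =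
      #{c ∈ Iic ![1, 1] | ∑ j, c j ≤ k} := by
    rw [pureOGenerators_succ, card_divisorsOfDegree_insertNth s _ (by omega)]
  rw [divCountSet_range_sub_eq_sum (sum_pureOGenerators (by omega)) (by omega) sum_inf_lt,
    Fin.sum_univ_succ, pureOGenerators_zero, card_divisorsOfDegree_insertNth 2 _ (by omega)]
  simp only [card_succ, sum_const, card_univ, Fintype.card_fin, smul_eq_mul]

/-- **A non-log-concave pure `O`-sequence of codimension 3 and type 4.**
For `e ≥ 12`, the pure `O`-sequence `h` generated by the four degree-`e`
monomials `x^4 y^4 z^(e-8)`, `x^(e-2) y z`, `x y^(e-2) z`, `x y z^(e-2)`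
satisfies `h (e-4) = 27`, `h (e-3) = 22`, `h (e-2) = 18`, `h (e-1) = 12`,
`h e = 4`, and `h (e-3)^2 < h (e-4) * h (e-2)`; in particular `h` is not
log-concave. -/
theorem stmt_8 (e : ℕ) (he : 12 ≤ e)
    (M : Set (Fin 3 → ℕ))
    (hM : M = {![4, 4, e - 8], ![e - 2, 1, 1], ![1, e - 2, 1], ![1, 1, e - 2]}) :
    divCountSet M (e - 4) = 27 ∧
      divCountSet M (e - 3) = 22 ∧
      divCountSet M (e - 2) = 18 ∧
      divCountSet M (e - 1) = 12 ∧
      divCountSet M e = 4 ∧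
      (divCountSet M (e - 3)) ^ 2 < divCountSet M (e - 4) * divCountSet M (e - 2) := by
  rw [hM, ← range_pureOGenerators]
  have h_sub := fun k => divCountSet_range_pureOGenerators_sub (k := k) he
  have h_top := h_sub 0 (by norm_num)
  rw [Nat.sub_zero] at h_top
  rw [h_sub 4 (by norm_num), h_sub 3 (by norm_num), h_sub 2 (by norm_num), h_sub 1 (by norm_num),
    h_top]
  decide
end

section
/- Let r ≥ 4 and e ≥ 2r+16, and consider the monomial in r variables with exponent vector a given by a(1) = e-r-8, a(2) = a(3) = a(4) = 4, and a(j) = 1 for 5 ≤ j ≤ r. For every degree d with r+8 ≤ d ≤ e-r-8, the number of monomial divisors of a of degree d equals 125·2^{r-4}. -/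
/-!
In a degree that is at least the degree of all the variables but one and at most the exponent of
that one, a divisor is determined by its remaining exponents, and these may be chosen freely: the
exceptional variable always absorbs the missing degree. With `x₁` as the exceptional variable, this
leaves `5` choices for each of three exponents and `2` choices for each of the other `r - 4`.
-/

theorem injOn_removeNth_of_sum_eq {M : Type*} [AddCancelCommMonoid M] {n : ℕ} (p : Fin (n + 1))
    (d : M) : Set.InjOn p.removeNth {b : Fin (n + 1) → M | ∑ j, b j = d} := by
  intro b hb c hc hbc
  have hrest (j : Fin n) : b (p.succAbove j) = c (p.succAbove j) := congrFun hbc j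
  have hsum : ∑ j, b j = ∑ j, c j := hb.trans hc.symm
  have hp : b p = c p := by
    simpa only [Fin.sum_univ_succAbove _ p, hrest, add_left_inj] using hsum
  exact funext ((Fin.forall_iff_succAbove p).2 ⟨hp, hrest⟩)

theorem image_removeNth_divisors {n : ℕ} (p : Fin (n + 1)) {a : Fin (n + 1) → ℕ} {d : ℕ}
    (hd_lower : ∑ j, p.removeNth a j ≤ d) (hd_upper : d ≤ a p) :
    p.removeNth '' {b | (∀ j, b j ≤ a j) ∧ ∑ j, b j = d} = Set.Iic (p.removeNth a) := by
  refine Set.Subset.antisymm ?_ fun c hc ↦ ?_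
  · rintro _ ⟨b, ⟨hb, -⟩, rfl⟩ j
    exact hb (p.succAbove j)
  · have hsum : ∑ j, c j ≤ d := (Finset.sum_le_sum fun j _ ↦ hc j).trans hd_lower
    refine ⟨p.insertNth (d - ∑ j, c j) c, ⟨?_, ?_⟩, Fin.removeNth_insertNth ..⟩
    · exact Fin.insertNth_le_iff.2 ⟨(Nat.sub_le ..).trans hd_upper, hc⟩
    · rw [Fin.sum_insertNth, Nat.sub_add_cancel hsum]

theorem ncard_Iic_eq_prod {ι : Type*} [Fintype ι] (a : ι → ℕ) :
    (Set.Iic a).ncard = ∏ j, (a j + 1) := by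
  classical
  rw [← Finset.coe_Iic, Set.ncard_coe_finset, Pi.card_Iic]
  simp only [Nat.card_Iic]

theorem divCount_eq_prod_removeNth {n : ℕ} (p : Fin (n + 1)) {a : Fin (n + 1) → ℕ} {d : ℕ}
    (hd_lower : ∑ j, p.removeNth a j ≤ d) (hd_upper : d ≤ a p) :
    divCount a d = ∏ j, (p.removeNth a j + 1) := by
  have hinj : Set.InjOn p.removeNth {b : Fin (n + 1) → ℕ | (∀ j, b j ≤ a j) ∧ ∑ j, b j = d} :=
    (injOn_removeNth_of_sum_eq p d).mono fun _ hb ↦ hb.2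
  rw [divCount, ← hinj.ncard_image, image_removeNth_divisors p hd_lower hd_upper,
    ncard_Iic_eq_prod]

/-- **Middle divisor counts of `x₁^(e-r-8) x₂^4 x₃^4 x₄^4 x₅ ⋯ x_r`.**
For `r ≥ 4` and `e ≥ 2r + 16`, the monomial in `r` variables whose first
exponent is `e - r - 8`, whose next three exponents are `4`, and whose
remaining exponents are `1`, has exactly `125 * 2^(r-4)` monomial divisors in
every degree `d` with `r + 8 ≤ d ≤ e - r - 8`. -/
theorem stmt_13 (r e : ℕ) (hr : 4 ≤ r) (he : 2 * r + 16 ≤ e)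
    (a : Fin r → ℕ)
    (ha : a = fun j : Fin r => if (j : ℕ) = 0 then e - r - 8 else if (j : ℕ) ≤ 3 then 4 else 1)
    (d : ℕ) (hd1 : r + 8 ≤ d) (hd2 : d ≤ e - r - 8) :
    divCount a d = 125 * 2 ^ (r - 4) := by
  obtain ⟨m, rfl⟩ : ∃ m, r = 3 + m + 1 := ⟨r - 4, by omega⟩
  have hfirst : a 0 = e - (3 + m + 1) - 8 := by simp [ha]
  have hrest : Fin.removeNth 0 a = Fin.append (fun _ : Fin 3 ↦ 4) (fun _ : Fin m ↦ 1) := by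
    refine funext (Fin.addCases (fun i ↦ ?_) fun i ↦ ?_)
    · have hi : (i : ℕ) + 1 ≤ 3 := i.isLt
      simp [ha, Fin.removeNth, hi]
    · have hi : ¬ 3 + (i : ℕ) + 1 ≤ 3 := by omega
      simp [ha, Fin.removeNth, hi]
  have hdegree : ∑ j, Fin.removeNth 0 a j = 12 + m := by
    simp [hrest, Fin.sum_univ_add]
  calc
    divCount a d = ∏ j, (Fin.removeNth 0 a j + 1) :=
      divCount_eq_prod_removeNth 0 (by omega) (by omega)
    _ = 5 ^ 3 * 2 ^ m := by simp [hrest, Fin.prod_univ_add]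
    _ = 125 * 2 ^ (3 + m + 1 - 4) := by
      have hexp : 3 + m + 1 - 4 = m := by omega
      norm_num [hexp]
end
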